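/- arXiv:1708.03703 — 7 statements merged into one kernel-verified Lean document; each statement's English description precedes it below -/
import Mathlib

section
/- Define c'_i = c_i + ∑_{j:(i,j)∈E}(q²_{ij} − q¹_{ij}) for each i ∈ V and q⁰'_{ij} = q²_{ij} − 2q¹_{ij} + q⁰_{ij} for each (i,j) ∈ E, and let g'(U) = ∑_{i∈U} c'_i + ∑_{(i,j)∈E₀(U)} q⁰'_{ij}. Then for every U ⊆ V, f(U) = g'(U) + ∑_{(i,j)∈E}(2q¹_{ij} − q²_{ij}); consequently U ⊆ V minimizes f over all subsets of V if and only if U minimizes g'. -/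
open Finset

variable {V : Type*} [Fintype V] [DecidableEq V]

/-- Edges of `E` with no endpoint in `U`. -/
def E0 (E : Finset (V × V)) (U : Finset V) : Finset (V × V) :=
  E.filter fun e => e.1 ∉ U ∧ e.2 ∉ U

/-- Edges of `E` with exactly one endpoint in `U`. -/
def E1 (E : Finset (V × V)) (U : Finset V) : Finset (V × V) :=
  E.filter fun e => (e.1 ∈ U ∧ e.2 ∉ U) ∨ (e.1 ∉ U ∧ e.2 ∈ U)

/-- Edges of `E` with both endpoints in `U`. -/
def E2 (E : Finset (V × V)) (U : Finset V) : Finset (V × V) :=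
  E.filter fun e => e.1 ∈ U ∧ e.2 ∈ U

/-- Edges of `E` incident to vertex `i`. -/
def incident (E : Finset (V × V)) (i : V) : Finset (V × V) :=
  E.filter fun e => e.1 = i ∨ e.2 = i

/-- The GVC objective `f`. -/
def gvcObj (E : Finset (V × V)) (c : V → ℝ) (q0 q1 q2 : V × V → ℝ) (U : Finset V) : ℝ :=
  ∑ i ∈ U, c i + ∑ e ∈ E0 E U, q0 e + ∑ e ∈ E1 E U, q1 e + ∑ e ∈ E2 E U, q2 e

/-!
The sets `E0 E U`, `E1 E U` and `E2 E U` partition `E`. Summed over `U`, the vertex corrections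
`q2 e - q1 e` count `e` once for each of its endpoints in `U`: once if `e` is in `E1 E U`, twice
if it is in `E2 E U`. Adding the constant `2 * q1 e - q2 e` for every edge leaves exactly `q0 e`,
`q1 e` and `q2 e` on the three classes, and a constant shift does not move the minimizers.
-/

namespace GVC

variable {α M : Type*} [DecidableEq α]

/-- The GVC objective with weights in an arbitrary additive commutative monoid; `gvcObj` is the case
of real weights. -/
def objective [AddCommMonoid M] (E : Finset (α × α)) (c : α → M) (q0 q1 q2 : α × α → M)
    (U : Finset α) : M :=
  ∑ i ∈ U, c i + ∑ e ∈ E0 E U, q0 e + ∑ e ∈ E1 E U, q1 e + ∑ e ∈ E2 E U, q2 e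

/-- The GVC1 objective, in which only edges disjoint from `U` carry a weight, with weights in an
arbitrary additive commutative monoid. -/
def objective1 [AddCommMonoid M] (E : Finset (α × α)) (c : α → M) (q0 : α × α → M)
    (U : Finset α) : M :=
  ∑ i ∈ U, c i + ∑ e ∈ E0 E U, q0 e

section AddCommMonoid

variable [AddCommMonoid M]

theorem sum_E0_add_sum_E1_add_sum_E2 (E : Finset (α × α)) (U : Finset α) (w : α × α → M) :
    ∑ e ∈ E0 E U, w e + ∑ e ∈ E1 E U, w e + ∑ e ∈ E2 E U, w e = ∑ e ∈ E, w e := by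
  simp only [E0, E1, E2, sum_filter, ← sum_add_distrib]
  refine sum_congr rfl fun e _ => ?_
  by_cases h₁ : e.1 ∈ U <;> by_cases h₂ : e.2 ∈ U <;> simp [h₁, h₂]

theorem sum_ite_eq_or_eq {a b : α} (hab : a ≠ b) (U : Finset α) (f : α → M) :
    ∑ i ∈ U, (if a = i ∨ b = i then f i else 0) =
      (if a ∈ U then f a else 0) + if b ∈ U then f b else 0 := by
  have hdisj : Disjoint {i ∈ U | a = i} {i ∈ U | b = i} :=
    disjoint_filter.2 fun i _ ha hb => hab (ha.trans hb.symm)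
  rw [← sum_filter, filter_or, sum_union hdisj, sum_filter, sum_filter, sum_ite_eq, sum_ite_eq]

theorem sum_sum_incident {E : Finset (α × α)} (hE : ∀ e ∈ E, e.1 ≠ e.2) (U : Finset α)
    (w : α × α → M) :
    ∑ i ∈ U, ∑ e ∈ incident E i, w e = ∑ e ∈ E1 E U, w e + 2 • ∑ e ∈ E2 E U, w e := by
  calc ∑ i ∈ U, ∑ e ∈ incident E i, w e
      = ∑ e ∈ E, ∑ i ∈ U, (if e.1 = i ∨ e.2 = i then w e else 0) := by
        simp only [incident, sum_filter]
        exact sum_comm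
    _ = ∑ e ∈ E, ((if e.1 ∈ U then w e else 0) + if e.2 ∈ U then w e else 0) :=
        sum_congr rfl fun e he => sum_ite_eq_or_eq (hE e he) U fun _ => w e
    _ = ∑ e ∈ E1 E U, w e + 2 • ∑ e ∈ E2 E U, w e := by
        simp only [E1, E2, sum_filter, smul_sum, ← sum_add_distrib]
        refine sum_congr rfl fun e _ => ?_
        by_cases h₁ : e.1 ∈ U <;> by_cases h₂ : e.2 ∈ U <;> simp [h₁, h₂, two_nsmul]

end AddCommMonoid

theorem objective_eq_objective1_add [AddCommGroup M] {E : Finset (α × α)}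
    (hE : ∀ e ∈ E, e.1 ≠ e.2) {c c' : α → M} {q0 q1 q2 q0' : α × α → M}
    (hc' : ∀ i, c' i = c i + ∑ e ∈ incident E i, (q2 e - q1 e))
    (hq0' : ∀ e ∈ E, q0' e = q2 e - 2 • q1 e + q0 e) (U : Finset α) :
    objective E c q0 q1 q2 U = objective1 E c' q0' U + ∑ e ∈ E, (2 • q1 e - q2 e) := by
  have hvertex : ∑ i ∈ U, c' i =
      ∑ i ∈ U, c i + (∑ e ∈ E1 E U, (q2 e - q1 e) + 2 • ∑ e ∈ E2 E U, (q2 e - q1 e)) := by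
    simp only [hc', sum_add_distrib, sum_sum_incident hE]
  have hedge : ∑ e ∈ E0 E U, q0' e = ∑ e ∈ E0 E U, (q2 e - 2 • q1 e + q0 e) :=
    sum_congr rfl fun e he => hq0' e (mem_filter.1 he).1
  rw [objective, objective1, hvertex, hedge, ← sum_E0_add_sum_E1_add_sum_E2 E U]
  simp only [sum_add_distrib, sum_sub_distrib, ← smul_sum]
  abel

end GVC

theorem gvc_eq_gvc1_general {α M : Type*} [DecidableEq α]
    [AddCommGroup M] [Preorder M] [IsOrderedAddMonoid M]
    {E : Finset (α × α)} (hE : ∀ e ∈ E, e.1 ≠ e.2) {c c' : α → M} {q0 q1 q2 q0' : α × α → M}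
    (hc' : ∀ i, c' i = c i + ∑ e ∈ incident E i, (q2 e - q1 e))
    (hq0' : ∀ e ∈ E, q0' e = q2 e - 2 • q1 e + q0 e) :
    (∀ U, GVC.objective E c q0 q1 q2 U =
      GVC.objective1 E c' q0' U + ∑ e ∈ E, (2 • q1 e - q2 e)) ∧
    (∀ U, (∀ W, GVC.objective E c q0 q1 q2 U ≤ GVC.objective E c q0 q1 q2 W) ↔
      ∀ W, GVC.objective1 E c' q0' U ≤ GVC.objective1 E c' q0' W) := by
  have hobj := GVC.objective_eq_objective1_add hE hc' hq0'
  exact ⟨hobj, fun U => by simp only [hobj, add_le_add_iff_right]⟩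

/-- reduction of GVC to GVC1. -/
theorem gvc_eq_gvc1
    (E : Finset (V × V))
    (hsimple : ∀ e ∈ E, e.1 ≠ e.2)
    (honce : ∀ e ∈ E, (e.2, e.1) ∉ E)
    (c : V → ℝ) (q0 q1 q2 : V × V → ℝ)
    (c' : V → ℝ) (hc' : ∀ i, c' i = c i + ∑ e ∈ incident E i, (q2 e - q1 e))
    (q0' : V × V → ℝ) (hq0' : ∀ e ∈ E, q0' e = q2 e - 2 * q1 e + q0 e)
    (g' : Finset V → ℝ)
    (hg' : ∀ U : Finset V, g' U = ∑ i ∈ U, c' i + ∑ e ∈ E0 E U, q0' e) :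
    (∀ U : Finset V,
        gvcObj E c q0 q1 q2 U = g' U + ∑ e ∈ E, (2 * q1 e - q2 e)) ∧
    (∀ U : Finset V,
        (∀ W : Finset V, gvcObj E c q0 q1 q2 U ≤ gvcObj E c q0 q1 q2 W) ↔
          (∀ W : Finset V, g' U ≤ g' W)) := by
  obtain rfl : g' = GVC.objective1 E c' q0' := funext hg'
  simp only [two_mul, ← two_nsmul] at hq0' ⊢
  exact gvc_eq_gvc1_general hsimple hc' hq0'
end

section
/- Let Q be the symmetric V×V real matrix with Q_{ij}=Q_{ji}=(q²_{ij} − 2q¹_{ij} + q⁰_{ij})/2 for every edge (i,j)∈E, Q_{ij}=0 when {i,j} is not an edge, and Q_{ii}=0, and let a_i = c_i + ∑_{j:(i,j)∈E}(q¹_{ij} − q⁰_{ij}). Then for every U ⊆ V, f(U) = ∑_{i∈U} a_i + ∑_{i∈U}∑_{j∈U} Q_{ij} + ∑_{(i,j)∈E} q⁰_{ij}; consequently U minimizes the GVC objective f if and only if U minimizes the UBQP objective ∑_{i∈U} a_i + ∑_{i∈U}∑_{j∈U} Q_{ij}. -/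
open Finset

variable {V : Type*} [Fintype V] [DecidableEq V]

/-!
Every edge meets `U` in zero, one or two endpoints. Taking `q⁰` as the baseline cost of an edge,
each endpoint in `U` adds `q¹ - q⁰`, which is charged to that vertex, and an edge with both
endpoints in `U` still lacks `q² - 2 q¹ + q⁰`. The double sum of `Q` over `U × U` meets each such
edge in its two orientations, whose entries add up to this correction.
-/

section EdgeSums

variable {α M : Type*} [DecidableEq α] [AddCommMonoid M]

lemma sum_E0_add_sum_E1_add_sum_E2 (E : Finset (α × α)) (U : Finset α) (w : α × α → M) :
    ∑ e ∈ E0 E U, w e + ∑ e ∈ E1 E U, w e + ∑ e ∈ E2 E U, w e = ∑ e ∈ E, w e := by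
  simp only [E0, E1, E2, sum_filter, ← sum_add_distrib]
  refine sum_congr rfl fun e _ => ?_
  by_cases h₁ : e.1 ∈ U <;> by_cases h₂ : e.2 ∈ U <;> simp [h₁, h₂]

lemma sum_filter_fst_mem_add_sum_filter_snd_mem (E : Finset (α × α)) (U : Finset α)
    (w : α × α → M) :
    ∑ e ∈ E with e.1 ∈ U, w e + ∑ e ∈ E with e.2 ∈ U, w e =
      ∑ e ∈ E1 E U, w e + 2 • ∑ e ∈ E2 E U, w e := by
  simp only [E1, E2, sum_filter, smul_sum, ← sum_add_distrib]
  refine sum_congr rfl fun e _ => ?_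
  by_cases h₁ : e.1 ∈ U <;> by_cases h₂ : e.2 ∈ U <;> simp [h₁, h₂, two_nsmul]

variable {E : Finset (α × α)}

lemma sum_incident (hloop : ∀ e ∈ E, e.1 ≠ e.2) (w : α × α → M) (i : α) :
    ∑ e ∈ incident E i, w e = ∑ e ∈ E with e.1 = i, w e + ∑ e ∈ E with e.2 = i, w e := by
  have hdisj : Disjoint (E.filter (·.1 = i)) (E.filter (·.2 = i)) :=
    disjoint_filter.2 fun e he h₁ h₂ => hloop e he (h₁.trans h₂.symm)
  rw [incident, filter_or, sum_union hdisj]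

lemma sum_sum_incident (hloop : ∀ e ∈ E, e.1 ≠ e.2) (w : α × α → M) (U : Finset α) :
    ∑ i ∈ U, ∑ e ∈ incident E i, w e = ∑ e ∈ E1 E U, w e + 2 • ∑ e ∈ E2 E U, w e := by
  simp only [sum_incident hloop, sum_add_distrib, sum_fiberwise_eq_sum_filter,
    sum_filter_fst_mem_add_sum_filter_snd_mem]

lemma sum_sum_eq_sum_E2 (honce : ∀ e ∈ E, e.swap ∉ E) {Q : α → α → M}
    (hQzero : ∀ i j, (i, j) ∉ E → (j, i) ∉ E → Q i j = 0) (U : Finset α) :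
    ∑ i ∈ U, ∑ j ∈ U, Q i j = ∑ e ∈ E2 E U, (Q e.1 e.2 + Q e.2 e.1) := by
  let reversed : Finset (α × α) := (E2 E U).map (Equiv.prodComm α α).toEmbedding
  have mem_reversed (p : α × α) : p ∈ reversed ↔ p.swap ∈ E2 E U := by
    simp [reversed, mem_map_equiv]
  have hdisj : Disjoint (E2 E U) reversed := disjoint_left.2 fun e he hrev =>
    honce e (mem_filter.1 he).1 (mem_filter.1 ((mem_reversed e).1 hrev)).1
  have hsub : E2 E U ∪ reversed ⊆ U ×ˢ U := fun p hp => by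
    simp only [mem_union, mem_reversed, E2, mem_filter, Prod.fst_swap, Prod.snd_swap] at hp
    exact mem_product.2 (by tauto)
  have hoff : ∀ p ∈ U ×ˢ U, p ∉ E2 E U ∪ reversed → Q p.1 p.2 = 0 := fun p hpU hp => by
    obtain ⟨h₁, h₂⟩ := mem_product.1 hpU
    rw [mem_union, mem_reversed, not_or] at hp
    exact hQzero p.1 p.2 (fun h => hp.1 (mem_filter.2 ⟨h, h₁, h₂⟩))
      (fun h => hp.2 (mem_filter.2 ⟨h, h₂, h₁⟩))
  calc ∑ i ∈ U, ∑ j ∈ U, Q i j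
      = ∑ p ∈ U ×ˢ U, Q p.1 p.2 := (sum_product' U U Q).symm
    _ = ∑ p ∈ E2 E U ∪ reversed, Q p.1 p.2 := (sum_subset hsub hoff).symm
    _ = ∑ e ∈ E2 E U, Q e.1 e.2 + ∑ e ∈ E2 E U, Q e.2 e.1 := by
      rw [sum_union hdisj, sum_map]; rfl
    _ = ∑ e ∈ E2 E U, (Q e.1 e.2 + Q e.2 e.1) := sum_add_distrib.symm

end EdgeSums

section Objective

variable {α : Type*} [DecidableEq α] {E : Finset (α × α)}

lemma gvcObj_eq_sum_E2 (hloop : ∀ e ∈ E, e.1 ≠ e.2) (c : α → ℝ) (q0 q1 q2 : α × α → ℝ)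
    (U : Finset α) :
    gvcObj E c q0 q1 q2 U =
      ∑ i ∈ U, (c i + ∑ e ∈ incident E i, (q1 e - q0 e)) +
        ∑ e ∈ E2 E U, (q2 e - 2 * q1 e + q0 e) + ∑ e ∈ E, q0 e := by
  rw [sum_add_distrib, sum_sum_incident hloop, ← sum_E0_add_sum_E1_add_sum_E2 E U q0, gvcObj]
  simp only [sum_add_distrib, sum_sub_distrib, ← mul_sum, nsmul_eq_mul]
  push_cast
  ring

theorem gvc_eq_ubqp_general (honce : ∀ e ∈ E, e.swap ∉ E)
    (c : α → ℝ) (q0 q1 q2 : α × α → ℝ) {Q : α → α → ℝ}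
    (hQedge : ∀ e ∈ E, Q e.1 e.2 + Q e.2 e.1 = q2 e - 2 * q1 e + q0 e)
    (hQzero : ∀ i j, (i, j) ∉ E → (j, i) ∉ E → Q i j = 0)
    {a : α → ℝ} (ha : ∀ i, a i = c i + ∑ e ∈ incident E i, (q1 e - q0 e)) :
    (∀ U : Finset α,
        gvcObj E c q0 q1 q2 U =
          ∑ i ∈ U, a i + ∑ i ∈ U, ∑ j ∈ U, Q i j + ∑ e ∈ E, q0 e) ∧
    (∀ U : Finset α,
        (∀ W : Finset α, gvcObj E c q0 q1 q2 U ≤ gvcObj E c q0 q1 q2 W) ↔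
          (∀ W : Finset α,
            (∑ i ∈ U, a i + ∑ i ∈ U, ∑ j ∈ U, Q i j) ≤
              (∑ i ∈ W, a i + ∑ i ∈ W, ∑ j ∈ W, Q i j))) := by
  have hloop : ∀ e ∈ E, e.1 ≠ e.2 := fun e he h =>
    honce e he (by rwa [show e.swap = e from Prod.ext h.symm h])
  have hobj (U : Finset α) : gvcObj E c q0 q1 q2 U =
      ∑ i ∈ U, a i + ∑ i ∈ U, ∑ j ∈ U, Q i j + ∑ e ∈ E, q0 e := by
    have hquad : ∑ i ∈ U, ∑ j ∈ U, Q i j = ∑ e ∈ E2 E U, (q2 e - 2 * q1 e + q0 e) :=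
      (sum_sum_eq_sum_E2 honce hQzero U).trans <|
        sum_congr rfl fun e he => hQedge e (mem_filter.1 he).1
    rw [gvcObj_eq_sum_E2 hloop, hquad, sum_congr rfl fun i _ => ha i]
  exact ⟨hobj, fun U => by simp only [hobj, add_le_add_iff_right]⟩

end Objective

/-- GVC as an unconstrained binary quadratic program. -/
theorem gvc_eq_ubqp
    (E : Finset (V × V))
    (hsimple : ∀ e ∈ E, e.1 ≠ e.2)
    (honce : ∀ e ∈ E, (e.2, e.1) ∉ E)
    (c : V → ℝ) (q0 q1 q2 : V × V → ℝ)
    (Q : V → V → ℝ)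
    (hQsym : ∀ i j, Q i j = Q j i)
    (hQedge : ∀ e ∈ E, Q e.1 e.2 = (q2 e - 2 * q1 e + q0 e) / 2)
    (hQzero : ∀ i j, (i, j) ∉ E → (j, i) ∉ E → Q i j = 0)
    (hQdiag : ∀ i, Q i i = 0)
    (a : V → ℝ) (ha : ∀ i, a i = c i + ∑ e ∈ incident E i, (q1 e - q0 e)) :
    (∀ U : Finset V,
        gvcObj E c q0 q1 q2 U =
          ∑ i ∈ U, a i + ∑ i ∈ U, ∑ j ∈ U, Q i j + ∑ e ∈ E, q0 e) ∧
    (∀ U : Finset V,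
        (∀ W : Finset V, gvcObj E c q0 q1 q2 U ≤ gvcObj E c q0 q1 q2 W) ↔
          (∀ W : Finset V,
            (∑ i ∈ U, a i + ∑ i ∈ U, ∑ j ∈ U, Q i j) ≤
              (∑ i ∈ W, a i + ∑ i ∈ W, ∑ j ∈ W, Q i j))) := by
  refine gvc_eq_ubqp_general honce c q0 q1 q2 (fun e he => ?_) hQzero ha
  rw [hQsym e.2, hQedge e he, add_halves]
end

section
/- Define the V₁×V₂ real matrix Q by Q_{ij} = q⁰_{ij} for (i,j)∈E and Q_{ij}=0 otherwise, a_i = c_i − ∑_{j:(i,j)∈E} q⁰_{ij} for i∈V₁, and b_j = d_j − ∑_{i:(i,j)∈E} q⁰_{ij} for j∈V₂. Then for all U₁ ⊆ V₁ and U₂ ⊆ V₂, g(U₁,U₂) = φ(U₁,U₂) + ∑_{(i,j)∈E} q⁰_{ij}; consequently (U₁,U₂) minimizes the bipartite GVC1 objective g if and only if it minimizes the BQP01 objective φ. -/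
open Finset

variable {V1 : Type*} {V2 : Type*} [Fintype V1] [Fintype V2] [DecidableEq V1] [DecidableEq V2]

/-- Edges of the bipartite edge set `E` with no endpoint selected. -/
def bE0 (E : Finset (V1 × V2)) (U1 : Finset V1) (U2 : Finset V2) : Finset (V1 × V2) :=
  E.filter fun e => e.1 ∉ U1 ∧ e.2 ∉ U2

/-- Edges of `E` with exactly one endpoint selected. -/
def bE1 (E : Finset (V1 × V2)) (U1 : Finset V1) (U2 : Finset V2) : Finset (V1 × V2) :=
  E.filter fun e => (e.1 ∈ U1 ∧ e.2 ∉ U2) ∨ (e.1 ∉ U1 ∧ e.2 ∈ U2)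

/-- Edges of `E` with both endpoints selected. -/
def bE2 (E : Finset (V1 × V2)) (U1 : Finset V1) (U2 : Finset V2) : Finset (V1 × V2) :=
  E.filter fun e => e.1 ∈ U1 ∧ e.2 ∈ U2

/-- The BQP01 objective with matrix `Q` and linear terms `a`, `b`. -/
def bqpObj (Q : V1 → V2 → ℝ) (a : V1 → ℝ) (b : V2 → ℝ)
    (U1 : Finset V1) (U2 : Finset V2) : ℝ :=
  ∑ i ∈ U1, ∑ j ∈ U2, Q i j + ∑ i ∈ U1, a i + ∑ j ∈ U2, b j

/-
By inclusion–exclusion, the edges avoiding both `U1` and `U2` weigh as much as all edges, minus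
those meeting `U1`, minus those meeting `U2`, plus those meeting both. Grouped by endpoint, the two
subtracted sums are the corrections in `a` and `b`; the last sum is the quadratic form of `Q`, and
the total weight of `E` is a constant, which does not affect minimizers.
-/

section General

variable {α β M : Type*} [DecidableEq α] [DecidableEq β]

theorem sum_filter_not_and_not_add {ι : Type*} [AddCommMonoid M] (s : Finset ι) (f : ι → M)
    (p q : ι → Prop) [DecidablePred p] [DecidablePred q] :
    ∑ x ∈ s with ¬p x ∧ ¬q x, f x + (∑ x ∈ s with p x, f x + ∑ x ∈ s with q x, f x) =
      ∑ x ∈ s, f x + ∑ x ∈ s with p x ∧ q x, f x := by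
  classical
  have sum_or_add_sum_and : ∑ x ∈ s with p x ∨ q x, f x + ∑ x ∈ s with p x ∧ q x, f x =
      ∑ x ∈ s with p x, f x + ∑ x ∈ s with q x, f x := by
    rw [filter_or, filter_and, sum_union_inter]
  simp only [← not_or]
  rw [← sum_or_add_sum_and, ← add_assoc, sum_filter_not_add_sum_filter]

theorem sum_sum_eq_sum_bE2 [AddCommMonoid M] {E : Finset (α × β)} {Q : α → β → M}
    (hQ : ∀ i j, (i, j) ∉ E → Q i j = 0) (U1 : Finset α) (U2 : Finset β) :
    ∑ i ∈ U1, ∑ j ∈ U2, Q i j = ∑ e ∈ bE2 E U1 U2, Q e.1 e.2 := by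
  have bE2_eq : bE2 E U1 U2 = {e ∈ U1 ×ˢ U2 | e ∈ E} := by
    ext e
    simp only [bE2, mem_filter, mem_product, and_comm]
  rw [← sum_product', bE2_eq]
  refine (sum_filter_of_ne fun e _ hne => ?_).symm
  by_contra he
  exact hne (hQ e.1 e.2 he)

theorem gvc1_eq_bqp01_add_sum [AddCommGroup M] {E : Finset (α × β)}
    {c : α → M} {d : β → M} {q0 : α × β → M} {Q : α → β → M} {a : α → M} {b : β → M}
    (hQedge : ∀ e ∈ E, Q e.1 e.2 = q0 e) (hQzero : ∀ i j, (i, j) ∉ E → Q i j = 0)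
    (ha : ∀ i, a i = c i - ∑ e ∈ E with e.1 = i, q0 e)
    (hb : ∀ j, b j = d j - ∑ e ∈ E with e.2 = j, q0 e)
    (U1 : Finset α) (U2 : Finset β) :
    ∑ i ∈ U1, c i + ∑ j ∈ U2, d j + ∑ e ∈ bE0 E U1 U2, q0 e =
      ∑ i ∈ U1, ∑ j ∈ U2, Q i j + ∑ i ∈ U1, a i + ∑ j ∈ U2, b j + ∑ e ∈ E, q0 e := by
  have sum_Q : ∑ i ∈ U1, ∑ j ∈ U2, Q i j = ∑ e ∈ bE2 E U1 U2, q0 e :=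
    (sum_sum_eq_sum_bE2 hQzero U1 U2).trans
      (sum_congr rfl fun e he => hQedge e (mem_filter.mp he).1)
  have sum_a : ∑ i ∈ U1, a i = ∑ i ∈ U1, c i - ∑ e ∈ E with e.1 ∈ U1, q0 e := by
    simp only [ha, sum_sub_distrib, sum_fiberwise_eq_sum_filter]
  have sum_b : ∑ j ∈ U2, b j = ∑ j ∈ U2, d j - ∑ e ∈ E with e.2 ∈ U2, q0 e := by
    simp only [hb, sum_sub_distrib, sum_fiberwise_eq_sum_filter]
  have sum_bE0 : ∑ e ∈ bE0 E U1 U2, q0 e =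
      ∑ e ∈ E, q0 e + ∑ e ∈ bE2 E U1 U2, q0 e -
        (∑ e ∈ E with e.1 ∈ U1, q0 e + ∑ e ∈ E with e.2 ∈ U2, q0 e) :=
    eq_sub_of_add_eq (sum_filter_not_and_not_add E q0 (·.1 ∈ U1) (·.2 ∈ U2))
  rw [sum_Q, sum_a, sum_b, sum_bE0]
  abel

theorem bipartite_gvc1_eq_bqp01_general [AddCommGroup M] [Preorder M] [IsOrderedAddMonoid M]
    (E : Finset (α × β)) (c : α → M) (d : β → M) (q0 : α × β → M) (Q : α → β → M)
    (hQedge : ∀ e ∈ E, Q e.1 e.2 = q0 e) (hQzero : ∀ i j, (i, j) ∉ E → Q i j = 0)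
    (a : α → M) (ha : ∀ i, a i = c i - ∑ e ∈ E with e.1 = i, q0 e)
    (b : β → M) (hb : ∀ j, b j = d j - ∑ e ∈ E with e.2 = j, q0 e)
    (g φ : Finset α → Finset β → M)
    (hg : ∀ U1 U2, g U1 U2 = ∑ i ∈ U1, c i + ∑ j ∈ U2, d j + ∑ e ∈ bE0 E U1 U2, q0 e)
    (hφ : ∀ U1 U2, φ U1 U2 = ∑ i ∈ U1, ∑ j ∈ U2, Q i j + ∑ i ∈ U1, a i + ∑ j ∈ U2, b j) :
    (∀ U1 U2, g U1 U2 = φ U1 U2 + ∑ e ∈ E, q0 e) ∧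
      ∀ U1 U2, (∀ W1 W2, g U1 U2 ≤ g W1 W2) ↔ ∀ W1 W2, φ U1 U2 ≤ φ W1 W2 := by
  have g_eq (U1 : Finset α) (U2 : Finset β) : g U1 U2 = φ U1 U2 + ∑ e ∈ E, q0 e := by
    rw [hg, hφ, gvc1_eq_bqp01_add_sum hQedge hQzero ha hb]
  exact ⟨g_eq, fun U1 U2 => by simp only [g_eq, add_le_add_iff_right]⟩

end General

/-- bipartite GVC1 as a BQP01. -/
theorem bipartite_gvc1_eq_bqp01
    (E : Finset (V1 × V2))
    (c : V1 → ℝ) (d : V2 → ℝ) (q0 : V1 × V2 → ℝ)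
    (Q : V1 → V2 → ℝ)
    (hQedge : ∀ e ∈ E, Q e.1 e.2 = q0 e)
    (hQzero : ∀ i j, (i, j) ∉ E → Q i j = 0)
    (a : V1 → ℝ)
    (ha : ∀ i, a i = c i - ∑ e ∈ E.filter (fun e => e.1 = i), q0 e)
    (b : V2 → ℝ)
    (hb : ∀ j, b j = d j - ∑ e ∈ E.filter (fun e => e.2 = j), q0 e)
    (g : Finset V1 → Finset V2 → ℝ)
    (hg : ∀ (U1 : Finset V1) (U2 : Finset V2),
        g U1 U2 = ∑ i ∈ U1, c i + ∑ j ∈ U2, d j + ∑ e ∈ bE0 E U1 U2, q0 e) :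
    (∀ (U1 : Finset V1) (U2 : Finset V2),
        g U1 U2 = bqpObj Q a b U1 U2 + ∑ e ∈ E, q0 e) ∧
    (∀ (U1 : Finset V1) (U2 : Finset V2),
        (∀ (W1 : Finset V1) (W2 : Finset V2), g U1 U2 ≤ g W1 W2) ↔
          (∀ (W1 : Finset V1) (W2 : Finset V2),
            bqpObj Q a b U1 U2 ≤ bqpObj Q a b W1 W2)) := by
  exact bipartite_gvc1_eq_bqp01_general E c d q0 Q hQedge hQzero a ha b hb g (bqpObj Q a b) hg
    fun _ _ => rfl
end

section
/- For every extreme point (x,y,z) of the GVC-LP feasible region P, the x-component is half-integral, i.e., x_i ∈ {0, 1/2, 1} for every i ∈ V. -/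
open Finset

/-- Feasibility for the GVC-LP: `x` is indexed by vertices and `y`, `z` by edges of `E`. -/
def GVCLPFeasible {V : Type*} (E : Finset (V × V)) (x : V → ℝ)
    (y z : {e : V × V // e ∈ E} → ℝ) : Prop :=
  (∀ i : V, 0 ≤ x i ∧ x i ≤ 1) ∧
  ∀ e : {e : V × V // e ∈ E},
    x e.1.1 + x e.1.2 ≤ 1 + y e ∧
    y e ≤ x e.1.1 ∧
    y e ≤ x e.1.2 ∧
    z e = 1 - x e.1.1 - x e.1.2 + y e ∧
    0 ≤ y e ∧
    0 ≤ z e ∧ z e ≤ 1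

/-!
If `v` is a direction with `p + v` and `p - v` both feasible and `p` is extreme, then `v = 0`.
So it suffices to find such a `v` at every feasible point, whose `x`-component vanishes only where
`x` is `0`, `1/2` or `1`. The cubic `f a = a (1 - a) (1 - 2 a)`, applied to each `x i`, works:
it is `1`-Lipschitz on `[0, 1]`, it satisfies `f (1 - a) = -f a`, and its zeros are `0`, `1/2`, `1`.

The shift `d` of `y` on an edge with endpoint values `a` and `b` must not exceed any of the slacks
`y`, `a - y`, `b - y` and `z` in absolute value, which places `d` in four intervals centred at `0`,
`f a`, `f b` and `f a + f b`. Any two of them meet, by the Lipschitz bound and the symmetry of `f`,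
so all four have a common point (Helly's theorem on the line).
-/

section ExtremePoints

variable {R M : Type*} [Ring R] [LinearOrder R] [IsStrictOrderedRing R] [AddCommGroup M]
  [Module R M] {A : Set M} {p v : M}

theorem mem_extremePoints_iff_forall_smul_add_one_sub_smul :
    p ∈ A.extremePoints R ↔ p ∈ A ∧ ∀ q ∈ A, ∀ r ∈ A, ∀ t : R, 0 < t → t < 1 →
      p = t • q + (1 - t) • r → q = r := by
  rw [mem_extremePoints]
  refine and_congr_right fun _ ↦ ⟨fun h q hq r hr t ht₀ ht₁ hp ↦ ?_, fun h q hq r hr hp ↦ ?_⟩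
  · obtain ⟨hqp, hrp⟩ := h q hq r hr ⟨t, 1 - t, ht₀, sub_pos.2 ht₁, add_sub_cancel t 1, hp.symm⟩
    exact hqp.trans hrp.symm
  · obtain ⟨a, b, ha, hb, hab, rfl⟩ := hp
    obtain rfl : b = 1 - a := eq_sub_of_add_eq' hab
    obtain rfl := h q hq r hr a ha (sub_pos.1 hb) rfl
    simp [Convex.combo_self hab]

theorem eq_zero_of_add_mem_of_sub_mem_of_mem_extremePoints [Invertible (2 : R)]
    (hp : p ∈ A.extremePoints R) (hadd : p + v ∈ A) (hsub : p - v ∈ A) : v = 0 :=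
  add_eq_left.1 <| hp.2 hadd hsub <| mem_openSegment_add_sub p v

end ExtremePoints

theorem exists_forall_abs_sub_le {ι G : Type*} [Finite ι] [Nonempty ι] [AddCommGroup G]
    [LinearOrder G] [IsOrderedAddMonoid G] {c r : ι → G}
    (h : ∀ i j, c i - c j ≤ r i + r j) : ∃ d, ∀ i, |c i - d| ≤ r i := by
  obtain ⟨k, hk⟩ := Finite.exists_max fun i ↦ c i - r i
  refine ⟨c k - r k, fun i ↦ abs_sub_le_iff.2 ⟨sub_le_comm.1 (hk i), ?_⟩⟩
  rw [sub_right_comm, sub_le_iff_le_add']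
  exact h k i

section HalfShift

variable {R : Type*} [CommRing R]

/-- The amount by which a vertex value `a ∈ [0, 1]` is moved, in either direction, to exhibit a
feasible point as a midpoint. -/
def halfShift (a : R) : R := a * (1 - a) * (1 - 2 * a)

theorem halfShift_zero : halfShift (0 : R) = 0 := by simp [halfShift]

theorem halfShift_one_sub (a : R) : halfShift (1 - a) = -halfShift a := by
  unfold halfShift
  ring

theorem halfShift_eq_zero_iff {𝕜 : Type*} [Field 𝕜] [NeZero (2 : 𝕜)] {a : 𝕜} :
    halfShift a = 0 ↔ a = 0 ∨ a = 1 / 2 ∨ a = 1 := by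
  have half : 1 - 2 * a = 0 ↔ a = 1 / 2 := by
    rw [sub_eq_zero, eq_div_iff two_ne_zero, mul_comm, eq_comm]
  rw [halfShift, mul_eq_zero, mul_eq_zero, half, sub_eq_zero, eq_comm (a := 1), or_assoc,
    or_comm (a := a = 1)]

variable [LinearOrder R] [IsStrictOrderedRing R]

theorem abs_halfShift_sub_halfShift_le {a b : R} (ha : a ∈ Set.Icc 0 1) (hb : b ∈ Set.Icc 0 1) :
    |halfShift a - halfShift b| ≤ |a - b| := by
  obtain ⟨ha₀, ha₁⟩ := ha
  obtain ⟨hb₀, hb₁⟩ := hb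
  have factor : halfShift a - halfShift b =
      (a - b) * (1 - 3 * (a + b) + 2 * (a ^ 2 + a * b + b ^ 2)) := by
    unfold halfShift
    ring
  rw [factor, abs_mul]
  refine mul_le_of_le_one_right (abs_nonneg _) (abs_le.2 ⟨?_, ?_⟩)
  · linarith [sq_nonneg (a + b - 1), sq_nonneg (a - b)]
  · linarith [mul_nonneg ha₀ (sub_nonneg.2 ha₁), mul_nonneg hb₀ (sub_nonneg.2 hb₁),
      mul_nonneg ha₀ (sub_nonneg.2 hb₁), mul_nonneg hb₀ (sub_nonneg.2 ha₁)]

theorem abs_halfShift_le {a : R} (ha : a ∈ Set.Icc 0 1) : |halfShift a| ≤ a := by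
  simpa [halfShift_zero, abs_of_nonneg ha.1] using
    abs_halfShift_sub_halfShift_le ha (Set.left_mem_Icc.2 zero_le_one)

theorem abs_halfShift_le_one_sub {a : R} (ha : a ∈ Set.Icc 0 1) : |halfShift a| ≤ 1 - a := by
  simpa [halfShift_one_sub] using abs_halfShift_le (Set.Icc.mem_iff_one_sub_mem.1 ha)

theorem abs_halfShift_add_halfShift_le {a b : R} (ha : a ∈ Set.Icc 0 1)
    (hb : b ∈ Set.Icc 0 1) : |halfShift a + halfShift b| ≤ |a + b - 1| := by
  convert abs_halfShift_sub_halfShift_le ha (Set.Icc.mem_iff_one_sub_mem.1 hb) using 2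
  · rw [halfShift_one_sub, sub_neg_eq_add]
  · ring

theorem exists_abs_le_and_abs_halfShift_sub_le {a b y : R} (ha : a ∈ Set.Icc 0 1)
    (hb : b ∈ Set.Icc 0 1) (hy : 0 ≤ y) (hya : y ≤ a) (hyb : y ≤ b) (hab : a + b ≤ 1 + y) :
    ∃ d, |d| ≤ y ∧ |halfShift a - d| ≤ a - y ∧ |halfShift b - d| ≤ b - y ∧
      |d - halfShift a - halfShift b| ≤ 1 - a - b + y := by
  have hsub : |halfShift a - halfShift b| ≤ (a - y) + (b - y) :=
    (abs_halfShift_sub_halfShift_le ha hb).trans <| abs_le.2 ⟨by linarith, by linarith⟩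
  have hadd : |halfShift a + halfShift b| ≤ y + (1 - a - b + y) :=
    (abs_halfShift_add_halfShift_le ha hb).trans <| abs_le.2 ⟨by linarith, by linarith⟩
  have ha₀ := abs_le.1 (abs_halfShift_le ha)
  have ha₁ := abs_le.1 (abs_halfShift_le_one_sub ha)
  have hb₀ := abs_le.1 (abs_halfShift_le hb)
  have hb₁ := abs_le.1 (abs_halfShift_le_one_sub hb)
  rw [abs_le] at hsub hadd
  obtain ⟨d, hd⟩ := exists_forall_abs_sub_le
    (c := ![0, halfShift a, halfShift b, halfShift a + halfShift b])
    (r := ![y, a - y, b - y, 1 - a - b + y]) <| by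
      intro i j
      fin_cases i <;> fin_cases j <;>
        simp only [Matrix.cons_val, Fin.mk_zero, Fin.mk_one, Fin.reduceFinMk] <;> linarith
  refine ⟨d, by simpa using hd 0, hd 1, hd 2, ?_⟩
  rw [sub_sub, abs_sub_comm]
  exact hd 3

end HalfShift

section Region

variable {V ι : Type*} {s t : ι → V}

/-- The GVC-LP feasible region, as a set of triples `(x, y, z)`, of a graph on `V`. The edges
are encoded as an indexed family, the edge `e : ι` joining `s e` to `t e`. -/
def gvclpRegion (R : Type*) [Ring R] [LE R] (s t : ι → V) :
    Set ((V → R) × (ι → R) × (ι → R)) :=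
  {p | (∀ i, 0 ≤ p.1 i ∧ p.1 i ≤ 1) ∧ ∀ e,
    p.1 (s e) + p.1 (t e) ≤ 1 + p.2.1 e ∧
    p.2.1 e ≤ p.1 (s e) ∧
    p.2.1 e ≤ p.1 (t e) ∧
    p.2.2 e = 1 - p.1 (s e) - p.1 (t e) + p.2.1 e ∧
    0 ≤ p.2.1 e ∧
    0 ≤ p.2.2 e ∧ p.2.2 e ≤ 1}

variable {R : Type*} [CommRing R] [LinearOrder R] [IsStrictOrderedRing R]

theorem add_mem_and_sub_mem_gvclpRegion {p v : (V → R) × (ι → R) × (ι → R)}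
    (hp : p ∈ gvclpRegion R s t)
    (hx₀ : ∀ i, |v.1 i| ≤ p.1 i) (hx₁ : ∀ i, |v.1 i| ≤ 1 - p.1 i)
    (hy : ∀ e, |v.2.1 e| ≤ p.2.1 e)
    (hs : ∀ e, |v.1 (s e) - v.2.1 e| ≤ p.1 (s e) - p.2.1 e)
    (ht : ∀ e, |v.1 (t e) - v.2.1 e| ≤ p.1 (t e) - p.2.1 e)
    (hz : ∀ e, |v.2.2 e| ≤ p.2.2 e)
    (hvz : ∀ e, v.2.2 e = v.2.1 e - v.1 (s e) - v.1 (t e)) :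
    p + v ∈ gvclpRegion R s t ∧ p - v ∈ gvclpRegion R s t := by
  simp only [abs_le] at hx₀ hx₁ hy hs ht hz
  have hpz (e : ι) : p.2.2 e = 1 - p.1 (s e) - p.1 (t e) + p.2.1 e := (hp.2 e).2.2.2.1
  constructor <;> refine ⟨fun i ↦ ?_, fun e ↦ ?_⟩ <;>
    simp only [Prod.fst_add, Prod.snd_add, Pi.add_apply, Prod.fst_sub, Prod.snd_sub, Pi.sub_apply]
  case left.refine_1 | right.refine_1 => constructor <;> linarith [hx₀ i, hx₁ i]
  case left.refine_2 | right.refine_2 =>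
    refine ⟨?_, ?_, ?_, ?_, ?_, ?_, ?_⟩ <;>
      linarith [hx₀ (s e), hx₀ (t e), hy e, hs e, ht e, hz e, hvz e, hpz e]

theorem exists_add_mem_and_sub_mem_gvclpRegion {p : (V → R) × (ι → R) × (ι → R)}
    (hp : p ∈ gvclpRegion R s t) :
    ∃ v, (∀ i, v.1 i = halfShift (p.1 i)) ∧
      p + v ∈ gvclpRegion R s t ∧ p - v ∈ gvclpRegion R s t := by
  have edge (e : ι) := exists_abs_le_and_abs_halfShift_sub_le (hp.1 (s e)) (hp.1 (t e))
    (hp.2 e).2.2.2.2.1 (hp.2 e).2.1 (hp.2 e).2.2.1 (hp.2 e).1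
  choose d hy hs ht hz using edge
  refine ⟨(fun i ↦ halfShift (p.1 i), d,
    fun e ↦ d e - halfShift (p.1 (s e)) - halfShift (p.1 (t e))), fun _ ↦ rfl,
    add_mem_and_sub_mem_gvclpRegion hp (fun i ↦ abs_halfShift_le (hp.1 i))
      (fun i ↦ abs_halfShift_le_one_sub (hp.1 i)) hy hs ht (fun e ↦ ?_) fun _ ↦ rfl⟩
  exact (hz e).trans_eq (hp.2 e).2.2.2.1.symm

theorem gvclp_extreme_point_half_integral_general {𝕜 : Type*} [Field 𝕜]
    [LinearOrder 𝕜] [IsStrictOrderedRing 𝕜] {p : (V → 𝕜) × (ι → 𝕜) × (ι → 𝕜)}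
    (hp : p ∈ (gvclpRegion 𝕜 s t).extremePoints 𝕜) (i : V) :
    p.1 i = 0 ∨ p.1 i = 1 / 2 ∨ p.1 i = 1 := by
  obtain ⟨v, hv, hadd, hsub⟩ := exists_add_mem_and_sub_mem_gvclpRegion hp.1
  obtain rfl := eq_zero_of_add_mem_of_sub_mem_of_mem_extremePoints hp hadd hsub
  exact halfShift_eq_zero_iff.1 (hv i).symm

end Region

/-- at every extreme point of the GVC-LP feasible region the `x` part is
half-integral. -/
theorem gvclp_extreme_point_half_integral
    {V : Type*} [Fintype V] [DecidableEq V]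
    (E : Finset (V × V))
    (x : V → ℝ) (y z : {e : V × V // e ∈ E} → ℝ)
    (hfeas : GVCLPFeasible E x y z)
    (hextreme : ∀ (x₁ x₂ : V → ℝ) (y₁ z₁ y₂ z₂ : {e : V × V // e ∈ E} → ℝ) (t : ℝ),
        GVCLPFeasible E x₁ y₁ z₁ → GVCLPFeasible E x₂ y₂ z₂ →
        0 < t → t < 1 →
        x = t • x₁ + (1 - t) • x₂ →
        y = t • y₁ + (1 - t) • y₂ →
        z = t • z₁ + (1 - t) • z₂ →
        x₁ = x₂ ∧ y₁ = y₂ ∧ z₁ = z₂) :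
    ∀ i : V, x i = 0 ∨ x i = 1 / 2 ∨ x i = 1 := by
  refine gvclp_extreme_point_half_integral_general (p := (x, y, z))
    (s := fun e : {e // e ∈ E} ↦ e.1.1) (t := fun e ↦ e.1.2) <|
    mem_extremePoints_iff_forall_smul_add_one_sub_smul.2 ⟨hfeas, ?_⟩
  rintro ⟨x₁, y₁, z₁⟩ h₁ ⟨x₂, y₂, z₂⟩ h₂ t ht₀ ht₁ h
  simp only [Prod.ext_iff] at h ⊢
  exact hextreme x₁ x₂ y₁ z₁ y₂ z₂ t h₁ h₂ ht₀ ht₁ h.1 h.2.1 h.2.2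
end

section
/- Assume c_i ≥ 0 for all i∈V, q⁰_{ij}, q¹_{ij}, q²_{ij} ≥ 0, q²_{ij} ≤ α·q¹_{ij} and q¹_{ij} ≤ β·q⁰_{ij} for all (i,j)∈E, where α ≥ 1 and β ≥ 1. Let x̄ ∈ [0,1]^V and set ȳ_{ij} = min(x̄_i, x̄_j) and z̄_{ij} = 1 − x̄_i − x̄_j + ȳ_{ij} for each edge (i,j). Suppose F(x̄,ȳ,z̄) ≤ f(W) for every W ⊆ V (the fractional solution lower-bounds every 0-1 solution). Let U* = { i ∈ V : x̄_i ≥ 1/2 } be the rounded solution. Then f(U*) ≤ max{2, α, αβ} · f(W) for every W ⊆ V; in particular the rounding algorithm produces a max{2, α, αβ}-approximate solution for GVC. -/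
open Finset

variable {V : Type*} [Fintype V] [DecidableEq V]

/-- The fractional GVC-LP objective. -/
def fracObj (E : Finset (V × V)) (c : V → ℝ) (q0 q1 q2 : V × V → ℝ)
    (x : V → ℝ) (y z : V × V → ℝ) : ℝ :=
  ∑ i, c i * x i +
    ∑ e ∈ E, (q2 e * y e + q1 e * (1 - y e - z e) + q0 e * z e)

open MeasureTheory Topology

/-!
With `y = min` and `z = 1 - x i - x j + y`, the fractional objective is the Lovász extension of
`f`: since a number `t ∈ [0, 1]` is the integral over `θ ∈ [0, 1]` of the indicator of `θ ≤ t`,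
`F` is the average over `θ` of `f {i | θ ≤ x i}`. If `F` is a lower bound for `f`, then almost
every superlevel set has value exactly `F`. As `V` is finite, the superlevel sets are locally
constant to the left of each `θ ∈ (0, 1]`, so every one of them has value `F`. Hence rounding at
any such threshold, `1/2` in particular, gives a minimiser of `f`.
-/

/-- The superlevel set `{i | θ ≤ x i}`, which is what rounding `x` at the threshold `θ` returns. -/
def upperLevel {ι α : Type*} [Fintype ι] [LinearOrder α] (x : ι → α) (θ : α) : Finset ι :=
  univ.filter fun i => θ ≤ x i

/-- The contribution to `F` of an edge whose endpoints have fractional values `s` and `t`, at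
`y = min s t` and `z = 1 - s - t + y`; the factor of `p₁` is `1 - y - z`. -/
def edgeObj (p₀ p₁ p₂ s t : ℝ) : ℝ :=
  p₂ * min s t + p₁ * (s + t - 2 * min s t) + p₀ * (1 - s - t + min s t)

theorem eventually_upperLevel_eq {ι α : Type*} [Fintype ι] [LinearOrder α] [TopologicalSpace α]
    [ClosedIicTopology α] (x : ι → α) (θ : α) :
    ∀ᶠ t in 𝓝[≤] θ, upperLevel x t = upperLevel x θ := by
  have h_mem : ∀ᶠ t in 𝓝[≤] θ, ∀ i, t ≤ x i ↔ θ ≤ x i := by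
    refine Filter.eventually_all.2 fun i => ?_
    rcases le_or_gt θ (x i) with hi | hi
    · filter_upwards [self_mem_nhdsWithin] with t ht
      exact iff_of_true (le_trans ht hi) hi
    · filter_upwards [nhdsWithin_le_nhds (eventually_gt_nhds hi)] with t ht
      exact iff_of_false ht.not_ge hi.not_ge
  filter_upwards [h_mem] with t ht
  simp only [upperLevel, ht]

theorem eq_of_le_of_intervalIntegral_eq {φ : ℝ → ℝ} {a b m θ : ℝ}
    (hφ : IntervalIntegrable φ volume a b) (hle : ∀ t ∈ Set.Ioc a b, m ≤ φ t)
    (hint : ∫ t in a..b, φ t = (b - a) * m) (hθ : θ ∈ Set.Ioc a b)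
    (hcont : ContinuousWithinAt φ (Set.Iic θ) θ) : φ θ = m := by
  have hab : a ≤ b := hθ.1.le.trans hθ.2
  have h_nonneg : 0 ≤ᵐ[volume.restrict (Set.Ioc a b)] fun t => φ t - m :=
    ae_restrict_of_forall_mem measurableSet_Ioc fun t ht => sub_nonneg.2 (hle t ht)
  have h_zero : ∫ t in a..b, (φ t - m) = 0 := by
    rw [intervalIntegral.integral_sub hφ intervalIntegrable_const, hint,
      intervalIntegral.integral_const, smul_eq_mul, sub_self]
  have h_ae : ∀ᵐ t, t ∈ Set.Ioc a b → φ t - m = 0 :=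
    (ae_restrict_iff' measurableSet_Ioc).1 <|
      (intervalIntegral.integral_eq_zero_iff_of_le_of_nonneg_ae hab h_nonneg
        (hφ.sub intervalIntegrable_const)).1 h_zero
  by_contra hne
  have h_lt : m < φ θ := lt_of_le_of_ne' (hle θ hθ) hne
  obtain ⟨l, hl, hl_sub⟩ := (mem_nhdsLE_iff_exists_Ioc_subset).1 (hcont.eventually_const_lt h_lt)
  obtain ⟨t, ht, ht_gt, ht_lt⟩ :=
    (Measure.dense_of_ae h_ae).exists_between (max_lt hl hθ.1)
  have h_eq : φ t - m = 0 := ht ⟨(le_max_right l a).trans_lt ht_gt, ht_lt.le.trans hθ.2⟩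
  have h_gt : m < φ t := hl_sub ⟨(le_max_left l a).trans_lt ht_gt, ht_lt.le⟩
  exact h_gt.ne' (sub_eq_zero.1 h_eq)

theorem intervalIntegrable_finsetSum {ι M : Type*} [NormedAddCommGroup M] {μ : Measure ℝ}
    {a b : ℝ} (s : Finset ι) {f : ι → ℝ → M} (hf : ∀ i ∈ s, IntervalIntegrable (f i) μ a b) :
    IntervalIntegrable (fun t => ∑ i ∈ s, f i t) μ a b := by
  simpa only [sum_fn] using IntervalIntegrable.sum s hf

theorem intervalIntegrable_indicator_Iic (a b t : ℝ) :
    IntervalIntegrable ((Set.Iic t).indicator (1 : ℝ → ℝ)) volume a b :=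
  ⟨(integrable_const 1).indicator measurableSet_Iic,
    (integrable_const 1).indicator measurableSet_Iic⟩

theorem integral_indicator_Iic {a b t : ℝ} (ht : t ∈ Set.Icc a b) :
    ∫ θ in a..b, (Set.Iic t).indicator (1 : ℝ → ℝ) θ = t - a := by
  rw [Set.Iic, intervalIntegral.integral_indicator ht]
  simp

theorem edgeObj_indicator_Iic (p₀ p₁ p₂ s t θ : ℝ) :
    edgeObj p₀ p₁ p₂ ((Set.Iic s).indicator 1 θ) ((Set.Iic t).indicator 1 θ) =
      p₀ + (p₁ - p₀) * (Set.Iic s).indicator 1 θ + (p₁ - p₀) * (Set.Iic t).indicator 1 θ +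
        (p₂ - 2 * p₁ + p₀) * (Set.Iic (min s t)).indicator 1 θ := by
  have h_min : min ((Set.Iic s).indicator (1 : ℝ → ℝ) θ) ((Set.Iic t).indicator 1 θ) =
      (Set.Iic (min s t)).indicator 1 θ := by
    by_cases hs : θ ≤ s <;> by_cases ht : θ ≤ t <;> simp [hs, ht]
  rw [edgeObj, h_min]
  ring

theorem intervalIntegrable_edgeObj_indicator_Iic (p₀ p₁ p₂ s t a b : ℝ) :
    IntervalIntegrable (fun θ => edgeObj p₀ p₁ p₂ ((Set.Iic s).indicator 1 θ)
      ((Set.Iic t).indicator 1 θ)) volume a b := by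
  simp only [edgeObj_indicator_Iic]
  exact ((intervalIntegrable_const.add
    ((intervalIntegrable_indicator_Iic a b s).const_mul _)).add
    ((intervalIntegrable_indicator_Iic a b t).const_mul _)).add
    ((intervalIntegrable_indicator_Iic a b (min s t)).const_mul _)

theorem integral_edgeObj_indicator_Iic (p₀ p₁ p₂ : ℝ) {s t : ℝ} (hs : s ∈ Set.Icc 0 1)
    (ht : t ∈ Set.Icc 0 1) :
    ∫ θ in (0 : ℝ)..1, edgeObj p₀ p₁ p₂ ((Set.Iic s).indicator 1 θ) ((Set.Iic t).indicator 1 θ) =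
      edgeObj p₀ p₁ p₂ s t := by
  have h_int (r u : ℝ) := (intervalIntegrable_indicator_Iic 0 1 u).const_mul r
  have h_min : min s t ∈ Set.Icc (0 : ℝ) 1 := ⟨le_min hs.1 ht.1, min_le_of_left_le hs.2⟩
  simp only [edgeObj_indicator_Iic]
  rw [intervalIntegral.integral_add
      ((intervalIntegrable_const.add (h_int _ s)).add (h_int _ t)) (h_int _ _),
    intervalIntegral.integral_add (intervalIntegrable_const.add (h_int _ s)) (h_int _ t),
    intervalIntegral.integral_add intervalIntegrable_const (h_int _ s)]
  simp only [intervalIntegral.integral_const_mul, intervalIntegral.integral_const,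
    integral_indicator_Iic hs, integral_indicator_Iic ht, integral_indicator_Iic h_min, edgeObj,
    smul_eq_mul]
  ring

section Objectives

variable {E : Finset (V × V)} {c : V → ℝ} {q0 q1 q2 : V × V → ℝ}

omit [Fintype V] in
theorem gvcObj_nonneg {U : Finset V} (hc : ∀ i ∈ U, 0 ≤ c i) (hq0 : ∀ e ∈ E, 0 ≤ q0 e)
    (hq1 : ∀ e ∈ E, 0 ≤ q1 e) (hq2 : ∀ e ∈ E, 0 ≤ q2 e) : 0 ≤ gvcObj E c q0 q1 q2 U :=
  add_nonneg (add_nonneg (add_nonneg (sum_nonneg hc)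
    (sum_nonneg fun e he => hq0 e (mem_of_mem_filter e he)))
    (sum_nonneg fun e he => hq1 e (mem_of_mem_filter e he)))
    (sum_nonneg fun e he => hq2 e (mem_of_mem_filter e he))

variable (E c q0 q1 q2)

theorem gvcObj_upperLevel (x : V → ℝ) (θ : ℝ) :
    gvcObj E c q0 q1 q2 (upperLevel x θ) =
      ∑ i, c i * (Set.Iic (x i)).indicator 1 θ +
        ∑ e ∈ E, edgeObj (q0 e) (q1 e) (q2 e) ((Set.Iic (x e.1)).indicator 1 θ)
          ((Set.Iic (x e.2)).indicator 1 θ) := by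
  unfold gvcObj E0 E1 E2 upperLevel
  simp only [sum_filter, add_assoc, ← sum_add_distrib]
  congr 1
  · refine sum_congr rfl fun i _ => ?_
    simp [Set.indicator_apply]
  · refine sum_congr rfl fun e _ => ?_
    by_cases h₁ : θ ≤ x e.1 <;> by_cases h₂ : θ ≤ x e.2 <;> norm_num [edgeObj, h₁, h₂]

theorem intervalIntegrable_gvcObj_upperLevel (x : V → ℝ) (a b : ℝ) :
    IntervalIntegrable (fun θ => gvcObj E c q0 q1 q2 (upperLevel x θ)) volume a b := by
  simp only [gvcObj_upperLevel]
  exact (intervalIntegrable_finsetSum _ fun i _ =>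
      (intervalIntegrable_indicator_Iic a b (x i)).const_mul (c i)).add
    (intervalIntegrable_finsetSum _ fun e _ => intervalIntegrable_edgeObj_indicator_Iic ..)

theorem integral_gvcObj_upperLevel {x : V → ℝ} (hx : ∀ i, x i ∈ Set.Icc 0 1) :
    ∫ θ in (0 : ℝ)..1, gvcObj E c q0 q1 q2 (upperLevel x θ) =
      ∑ i, c i * x i + ∑ e ∈ E, edgeObj (q0 e) (q1 e) (q2 e) (x e.1) (x e.2) := by
  have h_vertex (i : V) := (intervalIntegrable_indicator_Iic 0 1 (x i)).const_mul (c i)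
  have h_edge (e : V × V) :=
    intervalIntegrable_edgeObj_indicator_Iic (q0 e) (q1 e) (q2 e) (x e.1) (x e.2) 0 1
  simp only [gvcObj_upperLevel]
  rw [intervalIntegral.integral_add (intervalIntegrable_finsetSum _ fun i _ => h_vertex i)
      (intervalIntegrable_finsetSum _ fun e _ => h_edge e),
    intervalIntegral.integral_finsetSum fun i _ => h_vertex i,
    intervalIntegral.integral_finsetSum fun e _ => h_edge e]
  simp only [intervalIntegral.integral_const_mul, integral_indicator_Iic (hx _), sub_zero,
    integral_edgeObj_indicator_Iic _ _ _ (hx _) (hx _)]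

omit [DecidableEq V] in
theorem fracObj_eq_sum_edgeObj {x : V → ℝ} {y z : V × V → ℝ}
    (hy : ∀ e ∈ E, y e = min (x e.1) (x e.2)) (hz : ∀ e ∈ E, z e = 1 - x e.1 - x e.2 + y e) :
    fracObj E c q0 q1 q2 x y z =
      ∑ i, c i * x i + ∑ e ∈ E, edgeObj (q0 e) (q1 e) (q2 e) (x e.1) (x e.2) := by
  refine congrArg _ (sum_congr rfl fun e he => ?_)
  rw [hz e he, hy e he, edgeObj]
  ring

theorem continuousWithinAt_gvcObj_upperLevel (x : V → ℝ) (θ : ℝ) :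
    ContinuousWithinAt (fun t => gvcObj E c q0 q1 q2 (upperLevel x t)) (Set.Iic θ) θ :=
  continuousWithinAt_const.congr_of_eventuallyEq
    ((eventually_upperLevel_eq x θ).mono fun _ ht => congrArg _ ht) rfl

end Objectives

theorem gvc_rounding_approximation_general (E : Finset (V × V)) (c : V → ℝ)
    (q0 q1 q2 : V × V → ℝ) {x : V → ℝ} (hx : ∀ i, x i ∈ Set.Icc 0 1) {y z : V × V → ℝ}
    (hy : ∀ e ∈ E, y e = min (x e.1) (x e.2)) (hz : ∀ e ∈ E, z e = 1 - x e.1 - x e.2 + y e)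
    (hlb : ∀ W : Finset V, fracObj E c q0 q1 q2 x y z ≤ gvcObj E c q0 q1 q2 W)
    {θ : ℝ} (hθ : θ ∈ Set.Ioc 0 1) (W : Finset V) :
    gvcObj E c q0 q1 q2 (upperLevel x θ) ≤ gvcObj E c q0 q1 q2 W := by
  have h_average : ∫ t in (0 : ℝ)..1, gvcObj E c q0 q1 q2 (upperLevel x t) =
      (1 - 0) * fracObj E c q0 q1 q2 x y z := by
    rw [integral_gvcObj_upperLevel E c q0 q1 q2 hx, fracObj_eq_sum_edgeObj E c q0 q1 q2 hy hz,
      sub_zero, one_mul]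
  have h_eq : gvcObj E c q0 q1 q2 (upperLevel x θ) = fracObj E c q0 q1 q2 x y z :=
    eq_of_le_of_intervalIntegral_eq (φ := fun t => gvcObj E c q0 q1 q2 (upperLevel x t))
      (intervalIntegrable_gvcObj_upperLevel E c q0 q1 q2 x 0 1)
      (fun _ _ => hlb _) h_average hθ (continuousWithinAt_gvcObj_upperLevel E c q0 q1 q2 x θ)
  exact h_eq.trans_le (hlb W)

/-- the rounding algorithm is a `max {2, α, αβ}`-approximation for GVC. -/
theorem gvc_rounding_approximation
    (E : Finset (V × V))
    (hsimple : ∀ e ∈ E, e.1 ≠ e.2)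
    (honce : ∀ e ∈ E, (e.2, e.1) ∉ E)
    (c : V → ℝ) (q0 q1 q2 : V × V → ℝ)
    (α β : ℝ) (hα : 1 ≤ α) (hβ : 1 ≤ β)
    (hc : ∀ i, 0 ≤ c i)
    (hq0 : ∀ e ∈ E, 0 ≤ q0 e) (hq1 : ∀ e ∈ E, 0 ≤ q1 e) (hq2 : ∀ e ∈ E, 0 ≤ q2 e)
    (hq2q1 : ∀ e ∈ E, q2 e ≤ α * q1 e)
    (hq1q0 : ∀ e ∈ E, q1 e ≤ β * q0 e)
    (xbar : V → ℝ) (hxbar : ∀ i, 0 ≤ xbar i ∧ xbar i ≤ 1)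
    (ybar zbar : V × V → ℝ)
    (hybar : ∀ e : V × V, ybar e = min (xbar e.1) (xbar e.2))
    (hzbar : ∀ e : V × V, zbar e = 1 - xbar e.1 - xbar e.2 + ybar e)
    (hlb : ∀ W : Finset V,
        fracObj E c q0 q1 q2 xbar ybar zbar ≤ gvcObj E c q0 q1 q2 W)
    (Ustar : Finset V)
    (hUstar : Ustar = univ.filter fun i => 1 / 2 ≤ xbar i) :
    ∀ W : Finset V,
      gvcObj E c q0 q1 q2 Ustar ≤
        max (max 2 α) (α * β) * gvcObj E c q0 q1 q2 W := by
  subst hUstar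
  exact fun W => (gvc_rounding_approximation_general E c q0 q1 q2 hxbar (fun e _ => hybar e)
    (fun e _ => hzbar e) hlb (by norm_num) W).trans <| le_mul_of_one_le_left
      (gvcObj_nonneg (fun i _ => hc i) hq0 hq1 hq2) (by simp)
end

section
/- Define vertex weights w_i = c_i + ∑_{j:(i,j)∈E}(q¹_{ij} − q⁰_{ij}) for each i∈V. Then for every independent set P of G, f(P) = ∑_{i∈P} w_i + ∑_{(i,j)∈E} q⁰_{ij}; consequently an independent set P maximizes the ISPNEW objective f over all independent sets if and only if P is a maximum weight independent set for the weights w. -/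
open Finset

variable {V : Type*} [Fintype V] [DecidableEq V]

/-- `P` is an independent set of the graph with edge set `E`. -/
def IsIndep (E : Finset (V × V)) (P : Finset V) : Prop :=
  ∀ e ∈ E, ¬(e.1 ∈ P ∧ e.2 ∈ P)

/-- The ISPNEW objective. -/
def isObj (E : Finset (V × V)) (c : V → ℝ) (q0 q1 : V × V → ℝ) (P : Finset V) : ℝ :=
  ∑ i ∈ P, c i + ∑ e ∈ E0 E P, q0 e + ∑ e ∈ E1 E P, q1 e

/-!
An edge meets an independent set `P` in at most one vertex, so the edges incident to the vertices
of `P` are exactly the edges of `E₁(P)`, each counted once, and the remaining edges form `E₀(P)`.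
Start from the empty set, where every edge contributes `q⁰`; passing to `P` replaces `q⁰` by `q¹`
on `E₁(P)`, and this change can be charged edge by edge to the vertices of `P`.
-/

namespace IsIndep

omit [Fintype V]

variable {E : Finset (V × V)} {P : Finset V}

theorem pairwiseDisjoint_incident (hP : IsIndep E P) :
    (P : Set V).PairwiseDisjoint (incident E) := by
  intro i hi j hj hij
  refine Finset.disjoint_left.mpr fun e hei hej => ?_
  obtain ⟨he, hi_end⟩ := mem_filter.mp hei
  obtain ⟨-, hj_end⟩ := mem_filter.mp hej
  rcases hi_end with rfl | rfl <;> rcases hj_end with rfl | rfl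
  · exact hij rfl
  · exact hP e he ⟨hi, hj⟩
  · exact hP e he ⟨hj, hi⟩
  · exact hij rfl

theorem biUnion_incident (hP : IsIndep E P) : P.biUnion (incident E) = E1 E P := by
  ext e
  have := hP e
  simp only [mem_biUnion, incident, E1, mem_filter]
  grind

theorem sum_sum_incident {M : Type*} [AddCommMonoid M] (hP : IsIndep E P) (g : V × V → M) :
    ∑ i ∈ P, ∑ e ∈ incident E i, g e = ∑ e ∈ E1 E P, g e := by
  rw [← hP.biUnion_incident, sum_biUnion hP.pairwiseDisjoint_incident]

theorem E1_eq_sdiff_E0 (hP : IsIndep E P) : E1 E P = E \ E0 E P := by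
  ext e
  have := hP e
  simp only [E0, E1, mem_filter, mem_sdiff]
  tauto

theorem sum_E0_add_sum_E1 {M : Type*} [AddCommMonoid M] (hP : IsIndep E P) (g : V × V → M) :
    ∑ e ∈ E0 E P, g e + ∑ e ∈ E1 E P, g e = ∑ e ∈ E, g e := by
  rw [hP.E1_eq_sdiff_E0, add_comm]
  exact sum_sdiff (filter_subset _ E)

theorem isObj_eq_sum_add_sum (hP : IsIndep E P) (c : V → ℝ) (q0 q1 : V × V → ℝ) :
    isObj E c q0 q1 P =
      ∑ i ∈ P, (c i + ∑ e ∈ incident E i, (q1 e - q0 e)) + ∑ e ∈ E, q0 e := by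
  rw [isObj, sum_add_distrib, hP.sum_sum_incident, sum_sub_distrib, ← hP.sum_E0_add_sum_E1 q0]
  ring

end IsIndep

omit [Fintype V] in
theorem ispnew_eq_mwisp_general
    (E : Finset (V × V)) (c : V → ℝ) (q0 q1 : V × V → ℝ)
    (w : V → ℝ) (hw : ∀ i, w i = c i + ∑ e ∈ incident E i, (q1 e - q0 e)) :
    (∀ P : Finset V, IsIndep E P →
        isObj E c q0 q1 P = ∑ i ∈ P, w i + ∑ e ∈ E, q0 e) ∧
    (∀ P : Finset V, IsIndep E P →
        ((∀ P' : Finset V, IsIndep E P' → isObj E c q0 q1 P' ≤ isObj E c q0 q1 P) ↔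
          (∀ P' : Finset V, IsIndep E P' → ∑ i ∈ P', w i ≤ ∑ i ∈ P, w i))) := by
  have isObj_eq : ∀ P : Finset V, IsIndep E P →
      isObj E c q0 q1 P = ∑ i ∈ P, w i + ∑ e ∈ E, q0 e := by
    intro P hP
    simpa only [hw] using hP.isObj_eq_sum_add_sum c q0 q1
  refine ⟨isObj_eq, fun P hP => forall₂_congr fun P' hP' => ?_⟩
  rw [isObj_eq P hP, isObj_eq P' hP']
  exact add_le_add_iff_right _

/-- ISPNEW is equivalent to the maximum weight independent set problem. -/
theorem ispnew_eq_mwisp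
    (E : Finset (V × V))
    (hsimple : ∀ e ∈ E, e.1 ≠ e.2)
    (honce : ∀ e ∈ E, (e.2, e.1) ∉ E)
    (c : V → ℝ) (q0 q1 : V × V → ℝ)
    (w : V → ℝ) (hw : ∀ i, w i = c i + ∑ e ∈ incident E i, (q1 e - q0 e)) :
    (∀ P : Finset V, IsIndep E P →
        isObj E c q0 q1 P = ∑ i ∈ P, w i + ∑ e ∈ E, q0 e) ∧
    (∀ P : Finset V, IsIndep E P →
        ((∀ P' : Finset V, IsIndep E P' → isObj E c q0 q1 P' ≤ isObj E c q0 q1 P) ↔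
          (∀ P' : Finset V, IsIndep E P' → ∑ i ∈ P', w i ≤ ∑ i ∈ P, w i))) := by
  exact ispnew_eq_mwisp_general E c q0 q1 w hw
end

section
/- Let Ḡ be a subgraph of G with vertex set V(Ḡ) and edge set E(Ḡ), and let k be a real number. If ∑_{i∈V(Ḡ)} x_i ≤ k is a valid inequality for the independent sets of Ḡ (i.e., every independent set S of Ḡ satisfies |S| ≤ k), then for every U ⊆ V, ∑_{i∈U∩V(Ḡ)} 1 − |{(i,j)∈E(Ḡ) : i∈U and j∈U}| ≤ k; that is, ∑_{i∈V(Ḡ)} x_i − ∑_{(i,j)∈E(Ḡ)} y_{ij} ≤ k is a valid inequality for GVC2, where x is the 0-1 incidence vector of U and y_{ij} = x_i·x_j. -/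
open Finset

variable {V : Type*} [Fintype V] [DecidableEq V]

/-!
Delete from `U` the first endpoint of every edge inside `U`: what remains is independent, and at
most one vertex has been deleted per edge.
-/

section

variable {α : Type*} [DecidableEq α]

lemma E2_mono (E : Finset (α × α)) {U W : Finset α} (h : U ⊆ W) : E2 E U ⊆ E2 E W :=
  monotone_filter_right E fun _ _ he => ⟨h he.1, h he.2⟩

lemma isIndep_sdiff_image_fst_E2 (E : Finset (α × α)) (U : Finset α) :
    IsIndep E (U \ (E2 E U).image Prod.fst) := by
  rintro e he ⟨hfst, hsnd⟩
  obtain ⟨hfstU, hfst_notMem⟩ := mem_sdiff.1 hfst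
  have he2 : e ∈ E2 E U := mem_filter.2 ⟨he, hfstU, (mem_sdiff.1 hsnd).1⟩
  exact hfst_notMem (mem_image_of_mem _ he2)

lemma exists_isIndep_subset_card_le (E : Finset (α × α)) (U : Finset α) :
    ∃ P ⊆ U, IsIndep E P ∧ #U ≤ #P + #(E2 E U) := by
  refine ⟨U \ (E2 E U).image Prod.fst, sdiff_subset, isIndep_sdiff_image_fst_E2 E U, ?_⟩
  calc
    #U ≤ #(U \ (E2 E U).image Prod.fst) + #((E2 E U).image Prod.fst) :=
      card_le_card_sdiff_add_card
    _ ≤ #(U \ (E2 E U).image Prod.fst) + #(E2 E U) := by gcongr; exact card_image_le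

theorem gvc2_valid_inequality_general {R : Type*} [Ring R] [PartialOrder R] [IsOrderedRing R]
    {E : Finset (α × α)} {V' : Finset α} {k : R}
    (hvalid : ∀ S ⊆ V', IsIndep E S → (#S : R) ≤ k) (U : Finset α) :
    (#(U ∩ V') : R) - #(E2 E (U ∩ V')) ≤ k := by
  obtain ⟨P, hPU, hP, hcard⟩ := exists_isIndep_subset_card_le E (U ∩ V')
  rw [sub_le_iff_le_add]
  calc
    (#(U ∩ V') : R) ≤ #P + #(E2 E (U ∩ V')) := mod_cast Nat.mono_cast (α := R) hcard
    _ ≤ k + #(E2 E (U ∩ V')) := by gcongr; exact hvalid P (hPU.trans inter_subset_right) hP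

end

/-- a valid inequality for independent sets of a subgraph lifts to a valid
inequality for GVC2. -/
theorem gvc2_valid_inequality
    (E : Finset (V × V))
    (hsimple : ∀ e ∈ E, e.1 ≠ e.2)
    (honce : ∀ e ∈ E, (e.2, e.1) ∉ E)
    (V' : Finset V) (E' : Finset (V × V))
    (hE'sub : E' ⊆ E)
    (hE'ends : ∀ e ∈ E', e.1 ∈ V' ∧ e.2 ∈ V')
    (k : ℝ)
    (hvalid : ∀ S : Finset V, S ⊆ V' → (∀ e ∈ E', ¬(e.1 ∈ S ∧ e.2 ∈ S)) →
        (S.card : ℝ) ≤ k) :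
    ∀ U : Finset V,
      ((U ∩ V').card : ℝ) -
          (((E'.filter fun e => e.1 ∈ U ∧ e.2 ∈ U).card : ℕ) : ℝ) ≤ k := by
  intro U
  have hE2 : #(E2 E' (U ∩ V')) ≤ #(E2 E' U) := card_le_card (E2_mono E' inter_subset_left)
  exact (sub_le_sub_left (mod_cast hE2) _).trans (gvc2_valid_inequality_general hvalid U)
end
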